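/- arXiv:0812.3359 — 2 statements merged into one kernel-verified Lean document; each statement's English description precedes it below -/
import Mathlib

section
/- Let f be an M-map with f(∅) ≠ 0, and let f^{-1*} be its convolution inverse, given explicitly by f^{-1*}(∅) = 1/f(∅) and f^{-1*}(a) = Σ_{p} |p|!·(−1)^{|p|}·(∏_{c ∈ p} f(c)) / f(∅)^{|p|+1} for nonempty a (sum over set partitions p of a). Then for every nonempty subset a ⊆ Ω, log*(f^{-1*})(a) = − log* f(a). -/
open Finset

/-- The convolution product of M-maps: `(f * g)(a) = ∑_{b ⊆ a} f(b) · g(a \ b)`. -/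
noncomputable def MMap.conv {Ω : Type*} [DecidableEq Ω] (f g : Finset Ω → ℂ) : Finset Ω → ℂ :=
  fun a => ∑ b ∈ a.powerset, f b * g (a \ b)

/-- The cumulant `log* f` on nonempty subsets:
`log* f(a) = ∑_p (|p|−1)!·(−1)^{|p|−1}·(∏_{c ∈ p} f(c))/f(∅)^{|p|}`,
summed over all set partitions `p` of `a`, `|p|` being the number of blocks. -/
noncomputable def MMap.logStar {Ω : Type*} [DecidableEq Ω] (f : Finset Ω → ℂ) :
    Finset Ω → ℂ := fun a =>
  ∑ p : Finpartition a,
    (Nat.factorial (p.parts.card - 1) : ℂ) * (-1 : ℂ) ^ (p.parts.card - 1) *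
      (∏ c ∈ p.parts, f c) / (f ∅) ^ p.parts.card

/-- The explicit convolution inverse `f^{-1*}`: `f^{-1*}(∅) = 1/f(∅)` and, for
nonempty `a`, `f^{-1*}(a) = ∑_p |p|!·(−1)^{|p|}·(∏_{c ∈ p} f(c))/f(∅)^{|p|+1}`,
summed over all set partitions `p` of `a`. -/
noncomputable def MMap.invStar {Ω : Type*} [DecidableEq Ω] (f : Finset Ω → ℂ) :
    Finset Ω → ℂ := fun a =>
  if a = ∅ then 1 / f ∅ else
    ∑ p : Finpartition a,
      (Nat.factorial p.parts.card : ℂ) * (-1 : ℂ) ^ p.parts.card * (∏ c ∈ p.parts, f c) /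
        (f ∅) ^ (p.parts.card + 1)

/-!
Fix `x ∈ a`. Restricting an M-map to the sets containing `x` is a derivation `D` of the convolution
product, since `x` lies in exactly one of `b` and `a \ b`. Singling out the block containing `x` in
each set partition of `a` shows that `log* f (a) = (D f * f⁻¹) (a)`: the cumulant is a logarithmic
derivative. As `f⁻¹⁻¹ = f`, the theorem is the identity `D f * f⁻¹ + f * D f⁻¹ = D (f * f⁻¹) = 0`.
-/

namespace MMap

section Finpartition

variable {α : Type*} [GeneralizedBooleanAlgebra α] {a b : α}

theorem notMem_parts_of_finpartition_sdiff (q : Finpartition (a \ b)) : b ∉ q.parts := fun hb =>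
  q.ne_bot hb (disjoint_sdiff_self_right.eq_bot_of_le (q.le hb))

theorem parts_avoid_of_mem [DecidableEq α] (p : Finpartition a) (hb : b ∈ p.parts) :
    (p.avoid b).parts = p.parts.erase b := by
  have sdiff_eq_self {d : α} (hd : d ∈ p.parts) (hdb : d ≠ b) : d \ b = d :=
    (p.disjoint hd hb hdb).sdiff_eq_left
  ext c
  rw [Finpartition.mem_avoid, mem_erase]
  constructor
  · rintro ⟨d, hd, hdb, rfl⟩
    have hne : d ≠ b := fun h => hdb h.le
    rw [sdiff_eq_self hd hne]
    exact ⟨hne, hd⟩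
  · rintro ⟨hcb, hc⟩
    refine ⟨c, hc, fun hle => p.ne_bot hc ?_, sdiff_eq_self hc hcb⟩
    exact (p.disjoint hc hb hcb).eq_bot_of_le hle

end Finpartition

variable {Ω : Type*} [DecidableEq Ω]

/-- Both sides run over the set partitions of `a` with a distinguished block `b`. -/
theorem sum_powerset_sum_finpartition_sdiff {M : Type*} [AddCommMonoid M] (a : Finset Ω)
    (F : Finset Ω → Finset (Finset Ω) → M) :
    ∑ b ∈ a.powerset.erase ∅, ∑ q : Finpartition (a \ b), F b q.parts =
      ∑ p : Finpartition a, ∑ b ∈ p.parts, F b (p.parts.erase b) := by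
  rw [sum_sigma', sum_sigma']
  refine sum_bij'
    (fun s hs => ⟨s.2.extend (b := s.1) (c := a) ?_ sdiff_disjoint ?_, s.1⟩)
    (fun s _ => ⟨s.2, s.1.avoid s.2⟩) ?_ ?_ ?_ ?_ ?_
  · simp_all
  · simp_all
  · simp
  · rintro ⟨p, b⟩ hb
    simp only [mem_sigma, mem_univ, true_and] at hb
    simpa using ⟨p.ne_empty hb, p.subset hb⟩
  · rintro ⟨b, q⟩ _
    congr
    ext1
    simp [parts_avoid_of_mem, notMem_parts_of_finpartition_sdiff]
  · rintro ⟨p, b⟩ hb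
    simp only [mem_sigma, mem_univ, true_and] at hb
    congr
    ext1
    simp [parts_avoid_of_mem p hb, insert_erase hb]
  · rintro ⟨b, q⟩ _
    simp [notMem_parts_of_finpartition_sdiff]

section Convolution

theorem conv_apply (f g : Finset Ω → ℂ) (a : Finset Ω) :
    conv f g a = ∑ b ∈ a.powerset, f b * g (a \ b) := rfl

theorem conv_apply_eq_add_sum_erase (f g : Finset Ω → ℂ) (a : Finset Ω) :
    conv f g a = f ∅ * g a + ∑ b ∈ a.powerset.erase ∅, f b * g (a \ b) := by
  rw [conv_apply, ← add_sum_erase _ _ (empty_mem_powerset a), sdiff_empty]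

theorem conv_comm (f g : Finset Ω → ℂ) : conv f g = conv g f := by
  ext a
  refine sum_nbij' (a \ ·) (a \ ·) ?_ ?_ ?_ ?_ ?_ <;>
    simp +contextual [mul_comm]

theorem conv_right_injective {f : Finset Ω → ℂ} (hf : f ∅ ≠ 0) : Function.Injective (conv f) := by
  intro g h hgh
  ext a
  induction a using Finset.strongInduction with
  | H a ih =>
    have tail_eq : ∑ b ∈ a.powerset.erase ∅, f b * g (a \ b) =
        ∑ b ∈ a.powerset.erase ∅, f b * h (a \ b) := by
      refine sum_congr rfl fun b hb => ?_
      rw [mem_erase, mem_powerset] at hb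
      rw [ih _ (sdiff_ssubset hb.2 (nonempty_iff_ne_empty.mpr hb.1))]
    have at_a := congrFun hgh a
    rw [conv_apply_eq_add_sum_erase, conv_apply_eq_add_sum_erase, tail_eq] at at_a
    exact mul_left_cancel₀ hf (add_right_cancel at_a)

end Convolution

section Derivation

/-- The derivation of the convolution product at the point `x`: it keeps the values of `f` on the
sets containing `x` and replaces the others by `0`. If `f` is encoded as the polynomial
`∑ a, f a * ∏ i ∈ a, t i` modulo the squares `t i ^ 2`, it is the operator `t x * ∂/∂(t x)`. -/
def derivAt (x : Ω) (f : Finset Ω → ℂ) : Finset Ω → ℂ :=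
  fun b => if x ∈ b then f b else 0

theorem derivAt_empty (x : Ω) (f : Finset Ω → ℂ) : derivAt x f ∅ = 0 := if_neg (notMem_empty x)

theorem derivAt_conv (x : Ω) (f g : Finset Ω → ℂ) :
    derivAt x (conv f g) = conv (derivAt x f) g + conv f (derivAt x g) := by
  ext a
  simp only [Pi.add_apply, derivAt, conv_apply, ← sum_add_distrib]
  split_ifs with hx
  · refine sum_congr rfl fun b _ => ?_
    by_cases hb : x ∈ b <;> simp [hx, hb]
  · refine (sum_eq_zero fun b hb => ?_).symm
    have hxb : x ∉ b := fun h => hx (mem_powerset.mp hb h)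
    simp [hx, hxb]

theorem derivAt_single_empty (x : Ω) (z : ℂ) : derivAt x (Pi.single ∅ z) = 0 := by
  ext b
  by_cases hx : x ∈ b
  · simp [derivAt, ne_empty_of_mem hx]
  · simp [derivAt, hx]

end Derivation

section Inverse

theorem invStar_empty (f : Finset Ω → ℂ) : invStar f ∅ = 1 / f ∅ := if_pos rfl

theorem invStar_empty_ne_zero {f : Finset Ω → ℂ} (hf : f ∅ ≠ 0) : invStar f ∅ ≠ 0 := by
  rw [invStar_empty]
  exact one_div_ne_zero hf

theorem invStar_eq_sum (f : Finset Ω → ℂ) (a : Finset Ω) :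
    invStar f a = ∑ p : Finpartition a,
      (p.parts.card.factorial : ℂ) * (-1) ^ p.parts.card / f ∅ ^ (p.parts.card + 1) *
        ∏ c ∈ p.parts, f c := by
  rcases eq_or_ne a ∅ with rfl | ha
  · rw [invStar_empty, ← bot_eq_empty, Fintype.sum_unique, Finpartition.default_eq_empty]
    simp
  · rw [invStar, if_neg ha]
    exact sum_congr rfl fun p _ => by ring

theorem sum_erase_empty_mul_invStar (f g : Finset Ω → ℂ) (a : Finset Ω) :
    ∑ b ∈ a.powerset.erase ∅, g b * invStar f (a \ b) = ∑ p : Finpartition a,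
      ((p.parts.card - 1).factorial : ℂ) * (-1) ^ (p.parts.card - 1) / f ∅ ^ p.parts.card *
        ∑ b ∈ p.parts, g b * ∏ c ∈ p.parts.erase b, f c := by
  simp_rw [invStar_eq_sum, mul_sum]
  rw [sum_powerset_sum_finpartition_sdiff a fun b P => g b *
    ((P.card.factorial : ℂ) * (-1) ^ P.card / f ∅ ^ (P.card + 1) * ∏ c ∈ P, f c)]
  refine sum_congr rfl fun p _ => sum_congr rfl fun b hb => ?_
  rw [card_erase_of_mem hb, Nat.sub_add_cancel (card_pos.mpr ⟨b, hb⟩)]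
  ring

theorem conv_invStar {f : Finset Ω → ℂ} (hf : f ∅ ≠ 0) : conv f (invStar f) = Pi.single ∅ 1 := by
  ext a
  rw [conv_apply_eq_add_sum_erase]
  rcases a.eq_empty_or_nonempty with rfl | ha
  · simp [invStar_empty, hf]
  rw [sum_erase_empty_mul_invStar, invStar_eq_sum, mul_sum, ← sum_add_distrib,
    Pi.single_eq_of_ne ha.ne_empty]
  refine sum_eq_zero fun p _ => ?_
  have sum_parts : ∑ b ∈ p.parts, f b * ∏ c ∈ p.parts.erase b, f c =
      p.parts.card * ∏ c ∈ p.parts, f c := by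
    rw [sum_congr rfl fun b hb => mul_prod_erase p.parts f hb, sum_const, nsmul_eq_mul]
  obtain ⟨k, hk⟩ := Nat.exists_eq_add_one.mpr (card_pos.mpr (p.parts_nonempty ha.ne_empty))
  rw [sum_parts, hk, Nat.add_sub_cancel, Nat.factorial_succ]
  push_cast
  field_simp
  ring

theorem invStar_invStar {f : Finset Ω → ℂ} (hf : f ∅ ≠ 0) : invStar (invStar f) = f := by
  have hg := invStar_empty_ne_zero hf
  apply conv_right_injective hg
  rw [conv_invStar hg, conv_comm, conv_invStar hf]

end Inverse

theorem logStar_eq_conv_derivAt_invStar (f : Finset Ω → ℂ) {a : Finset Ω} {x : Ω} (hx : x ∈ a) :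
    logStar f a = conv (derivAt x f) (invStar f) a := by
  have sum_parts (p : Finpartition a) :
      ∑ b ∈ p.parts, derivAt x f b * ∏ c ∈ p.parts.erase b, f c = ∏ c ∈ p.parts, f c := by
    have part_mem := p.part_mem.mpr hx
    rw [sum_eq_single_of_mem _ part_mem fun b hb hne => ?_]
    · rw [derivAt, if_pos (p.mem_part hx), mul_prod_erase p.parts f part_mem]
    · rw [derivAt, if_neg fun hxb => hne (p.part_eq_of_mem hb hxb).symm, zero_mul]
  rw [conv_apply_eq_add_sum_erase, sum_erase_empty_mul_invStar, derivAt_empty, zero_mul, zero_add]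
  exact sum_congr rfl fun p _ => by rw [sum_parts, div_mul_eq_mul_div]

end MMap

open MMap in
theorem logStar_invStar_general {Ω : Type*} [DecidableEq Ω] (f : Finset Ω → ℂ) (hf : f ∅ ≠ 0)
    (a : Finset Ω) (ha : a.Nonempty) : logStar (invStar f) a = -logStar f a := by
  obtain ⟨x, hx⟩ := ha
  have leibniz : conv (derivAt x f) (invStar f) + conv f (derivAt x (invStar f)) = 0 := by
    rw [← derivAt_conv, conv_invStar hf, derivAt_single_empty]
  calc logStar (invStar f) a
      = conv (derivAt x (invStar f)) (invStar (invStar f)) a :=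
        logStar_eq_conv_derivAt_invStar _ hx
    _ = conv f (derivAt x (invStar f)) a := by rw [invStar_invStar hf, conv_comm]
    _ = -conv (derivAt x f) (invStar f) a := eq_neg_of_add_eq_zero_right (congrFun leibniz a)
    _ = -logStar f a := by rw [logStar_eq_conv_derivAt_invStar f hx]

/-- For an M-map `f` with `f(∅) ≠ 0`, the cumulant of the convolution inverse is
the negative of the cumulant: `log*(f^{-1*})(a) = − log* f(a)` on nonempty `a`. -/
theorem logStar_invStar {Ω : Type*} [DecidableEq Ω] [Fintype Ω]
    (f : Finset Ω → ℂ) (hf : f ∅ ≠ 0) (a : Finset Ω) (ha : a.Nonempty) :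
    MMap.logStar (MMap.invStar f) a = - MMap.logStar f a :=
  logStar_invStar_general f hf a ha
end

section
/- Let Ω = {1,…,n}. For each subset c ⊆ Ω let z(c) : ℝⁿ → ℂ be an infinitely differentiable function such that z(c)(γ) depends only on the coordinates γ_j with j ∈ c (i.e. z(c)(γ) = z(c)(γ') whenever γ_j = γ'_j for all j ∈ c), and suppose z(∅) is the constant function 1. For subsets b ⊆ a ⊆ Ω define z_b(c) = ∂^γ_{b∩c} z(c)|_{γ=0}, the mixed partial derivative of z(c) with respect to the coordinates indexed by b ∩ c, evaluated at γ = 0. Then the mixed partial derivative with respect to the coordinates indexed by b of the function γ ↦ Σ_{p} (|p|−1)!·(−1)^{|p|−1} ∏_{c ∈ p} z(c)(γ) (sum over set partitions p of a), evaluated at γ = 0, equals Σ_{p} (|p|−1)!·(−1)^{|p|−1} ∏_{c ∈ p} z_b(c). -/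
open Finset

/-- The mixed partial derivative `∂_a h(x)` of `h : ℝⁿ → E` with respect to the
(distinct) coordinates indexed by the finite set `a = {a_1 < ⋯ < a_k}`, defined by
feeding the corresponding standard basis vectors to the `k`-th iterated Fréchet
derivative.  For smooth `h` this is the usual mixed partial derivative
`∂^k h/∂x_{a_1}⋯∂x_{a_k}(x)` (independent of the order of differentiation), and
`∂_∅ h(x) = h(x)`. -/
noncomputable def mixedPartial {n : ℕ} {E : Type*} [NormedAddCommGroup E]
    [NormedSpace ℝ E] (h : (Fin n → ℝ) → E) (a : Finset (Fin n)) (x : Fin n → ℝ) : E :=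
  iteratedFDeriv ℝ a.card h x (fun i => Pi.single (a.orderEmbOfFin rfl i) 1)

/-!
Differentiate one coordinate at a time, in decreasing order. The coordinate `i` lies in exactly one
block `c` of the partition, so by the Leibniz rule `∂_i` of the block product hits only the factor
`z c`: the other factors, and all their mixed partials, do not depend on `γ_i`. Hence `∂_b` of the
product is the product of the `∂_{b ∩ c} z c`, and linearity handles the sum over partitions.
-/

theorem orderEmbOfFin_insert_of_forall_lt {α : Type*} [LinearOrder α] {i : α} {b : Finset α}
    (hi : ∀ j ∈ b, i < j) (hcard : #(insert i b) = #b + 1) :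
    ⇑((insert i b).orderEmbOfFin hcard) = Fin.cons i (b.orderEmbOfFin rfl) := by
  have hmem : ∀ k, (Fin.cons i (b.orderEmbOfFin rfl) : Fin (#b + 1) → α) k ∈ insert i b :=
    Fin.cases (mem_insert_self i b) fun k => mem_insert_of_mem (b.orderEmbOfFin_mem rfl k)
  have hmono : StrictMono (Fin.cons i (b.orderEmbOfFin rfl) : Fin (#b + 1) → α) :=
    Fin.strictMono_cons.2
      ⟨fun k => hi _ (b.orderEmbOfFin_mem rfl k), (b.orderEmbOfFin rfl).strictMono⟩
  exact (orderEmbOfFin_unique hcard hmem hmono).symm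

section FDeriv

variable {𝕜 E A ι : Type*} [NontriviallyNormedField 𝕜] [NormedAddCommGroup E] [NormedSpace 𝕜 E]
  [NormedCommRing A] [NormedAlgebra 𝕜 A] [DecidableEq ι]

theorem fderiv_prod_apply_of_forall_ne_eq_zero {s : Finset ι} {g : ι → E → A} {x v : E} {k : ι}
    (hk : k ∈ s) (hg : ∀ j ∈ s, DifferentiableAt 𝕜 (g j) x)
    (hzero : ∀ j ∈ s, j ≠ k → fderiv 𝕜 (g j) x v = 0) :
    fderiv 𝕜 (fun y => ∏ j ∈ s, g j y) x v = fderiv 𝕜 (g k) x v * ∏ j ∈ s.erase k, g j x := by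
  rw [fderiv_finsetProd hg, _root_.sum_apply, sum_eq_single_of_mem k hk]
  · rw [smul_apply, smul_eq_mul, mul_comm]
  · intro j hj hjk
    rw [smul_apply, hzero j hj hjk, smul_zero]

end FDeriv

section DependsOn

variable {𝕜 ι E : Type*} [NontriviallyNormedField 𝕜] [NormedAddCommGroup E] [NormedSpace 𝕜 E]
  {f : (ι → 𝕜) → E} {s : Set ι}

theorem dependsOn_iteratedFDeriv [Fintype ι] (hf : DependsOn f s) (k : ℕ) :
    DependsOn (iteratedFDeriv 𝕜 k f) s := by
  intro x y hxy
  have translate_eq : (fun u => f (u + (y - x))) = f :=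
    funext fun u => hf fun j hj => by simp [hxy j hj]
  calc iteratedFDeriv 𝕜 k f x
      = iteratedFDeriv 𝕜 k (fun u => f (u + (y - x))) x := by rw [translate_eq]
    _ = iteratedFDeriv 𝕜 k f (x + (y - x)) := iteratedFDeriv_comp_add_right k (y - x) x
    _ = iteratedFDeriv 𝕜 k f y := by rw [add_sub_cancel]

theorem fderiv_single_eq_zero_of_dependsOn [Finite ι] [DecidableEq ι] {x : ι → 𝕜} {i : ι}
    (hf : DependsOn f s) (hdiff : DifferentiableAt 𝕜 f x) (hi : i ∉ s) :
    fderiv 𝕜 f x (Pi.single i 1) = 0 := by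
  have := Fintype.ofFinite ι
  have line_const : (fun t : 𝕜 => f (x + t • Pi.single i 1)) = fun _ => f x :=
    funext fun t => hf fun j hj => by simp [ne_of_mem_of_not_mem hj hi]
  rw [← hdiff.lineDeriv_eq_fderiv, lineDeriv, line_const, deriv_const]

end DependsOn

section MixedPartial

variable {n : ℕ} {E : Type*} [NormedAddCommGroup E] [NormedSpace ℝ E] {b : Finset (Fin n)}
  {x : Fin n → ℝ}

theorem mixedPartial_empty (f : (Fin n → ℝ) → E) : mixedPartial f ∅ = f := rfl

theorem mixedPartial_eq_iteratedFDeriv (f : (Fin n → ℝ) → E) (b : Finset (Fin n))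
    (x : Fin n → ℝ) {k : ℕ} (hk : #b = k) :
    mixedPartial f b x =
      iteratedFDeriv ℝ k f x (fun i => Pi.single (b.orderEmbOfFin hk i) 1) := by
  subst hk
  rfl

theorem mixedPartial_insert_of_forall_lt {f : (Fin n → ℝ) → E} {i : Fin n}
    (hf : ContDiffAt ℝ (#b + 1) f x) (hi : ∀ j ∈ b, i < j) :
    mixedPartial f (insert i b) x = fderiv ℝ (mixedPartial f b) x (Pi.single i 1) := by
  have hcard : #(insert i b) = #b + 1 := card_insert_of_notMem fun hib => (hi i hib).false
  have hdiff : DifferentiableAt ℝ (iteratedFDeriv ℝ #b f) x :=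
    hf.differentiableAt_iteratedFDeriv (by exact_mod_cast Nat.lt_succ_self #b)
  rw [mixedPartial_eq_iteratedFDeriv f _ x hcard, orderEmbOfFin_insert_of_forall_lt hi hcard,
    iteratedFDeriv_succ_apply_left]
  exact (fderiv_continuousMultilinear_apply_const_apply hdiff _ _).symm

theorem mixedPartial_insert_inter_of_forall_lt {f : (Fin n → ℝ) → E} {c : Finset (Fin n)}
    {i : Fin n} (hf : ContDiffAt ℝ (#b + 1) f x) (hi : ∀ j ∈ b, i < j) (hic : i ∈ c) :
    mixedPartial f (insert i b ∩ c) x =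
      fderiv ℝ (mixedPartial f (b ∩ c)) x (Pi.single i 1) := by
  have hcard : (#(b ∩ c) + 1 : WithTop ℕ∞) ≤ #b + 1 :=
    mod_cast Nat.succ_le_succ (card_le_card inter_subset_left)
  rw [insert_inter_of_mem hic]
  exact mixedPartial_insert_of_forall_lt (hf.of_le hcard) fun j hj => hi j (mem_inter.1 hj).1

theorem differentiableAt_mixedPartial {f : (Fin n → ℝ) → E} {N : WithTop ℕ∞}
    (hf : ContDiffAt ℝ N f x) (hb : #b < N) : DifferentiableAt ℝ (mixedPartial f b) x :=
  (hf.differentiableAt_iteratedFDeriv hb).continuousMultilinear_apply_const _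

theorem dependsOn_mixedPartial {f : (Fin n → ℝ) → E} {s : Set (Fin n)} (hf : DependsOn f s)
    (b : Finset (Fin n)) : DependsOn (mixedPartial f b) s := fun x y hxy => by
  rw [mixedPartial, mixedPartial, dependsOn_iteratedFDeriv hf _ hxy]

theorem mixedPartial_sum {ι : Type*} {s : Finset ι} {f : ι → (Fin n → ℝ) → E}
    (hf : ∀ j ∈ s, ContDiffAt ℝ #b (f j) x) :
    mixedPartial (fun y => ∑ j ∈ s, f j y) b x = ∑ j ∈ s, mixedPartial (f j) b x := by
  simp only [mixedPartial, iteratedFDeriv_fun_sum_apply hf, _root_.sum_apply]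

end MixedPartial

section MixedPartialAlgebra

variable {n : ℕ} {A : Type*} [NormedCommRing A] [NormedAlgebra ℝ A]

theorem mixedPartial_const_mul (w : A) {f : (Fin n → ℝ) → A} {b : Finset (Fin n)} {x : Fin n → ℝ}
    (hf : ContDiffAt ℝ #b f x) :
    mixedPartial (fun y => w * f y) b x = w * mixedPartial f b x := by
  simp only [mixedPartial, ← smul_eq_mul, iteratedFDeriv_const_smul_apply' hf,
    smul_apply]

theorem fderiv_prod_mixedPartial_inter_single {ι : Type*} {s : Finset ι}
    {S : ι → Finset (Fin n)} {f : ι → (Fin n → ℝ) → A} {b : Finset (Fin n)} {i : Fin n}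
    {x : Fin n → ℝ} (hf : ∀ j ∈ s, ContDiffAt ℝ (#b + 1) (f j) x)
    (hdep : ∀ j ∈ s, DependsOn (f j) (S j)) (hS : (s : Set ι).PairwiseDisjoint S)
    (hi : ∀ j ∈ b, i < j) (hiS : i ∈ s.biUnion S) :
    fderiv ℝ (fun y => ∏ j ∈ s, mixedPartial (f j) (b ∩ S j) y) x (Pi.single i 1) =
      ∏ j ∈ s, mixedPartial (f j) (insert i b ∩ S j) x := by
  classical
  obtain ⟨k, hk, hik⟩ := mem_biUnion.1 hiS
  have notMem_of_ne {j : ι} (hj : j ∈ s) (hjk : j ≠ k) : i ∉ S j :=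
    fun hij => hjk (hS.elim_finset hj hk i hij hik)
  have differentiable_factor (j : ι) (hj : j ∈ s) :
      DifferentiableAt ℝ (mixedPartial (f j) (b ∩ S j)) x :=
    differentiableAt_mixedPartial (hf j hj)
      (mod_cast Nat.lt_succ_of_le (card_le_card inter_subset_left))
  have fderiv_other (j : ι) (hj : j ∈ s) (hjk : j ≠ k) :
      fderiv ℝ (mixedPartial (f j) (b ∩ S j)) x (Pi.single i 1) = 0 :=
    fderiv_single_eq_zero_of_dependsOn (dependsOn_mixedPartial (hdep j hj) _)
      (differentiable_factor j hj) (mod_cast notMem_of_ne hj hjk)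
  rw [fderiv_prod_apply_of_forall_ne_eq_zero hk differentiable_factor fderiv_other,
    ← mixedPartial_insert_inter_of_forall_lt (hf k hk) hi hik, ← mul_prod_erase s _ hk]
  refine congrArg _ (prod_congr rfl fun j hj => ?_)
  obtain ⟨hjk, hjs⟩ := mem_erase.1 hj
  rw [insert_inter_of_notMem (notMem_of_ne hjs hjk)]

theorem mixedPartial_prod_of_pairwiseDisjoint {ι : Type*} {s : Finset ι}
    {S : ι → Finset (Fin n)} {f : ι → (Fin n → ℝ) → A} {b : Finset (Fin n)}
    (hf : ∀ j ∈ s, ContDiff ℝ #b (f j)) (hdep : ∀ j ∈ s, DependsOn (f j) (S j))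
    (hS : (s : Set ι).PairwiseDisjoint S) (hb : b ⊆ s.biUnion S) (x : Fin n → ℝ) :
    mixedPartial (fun y => ∏ j ∈ s, f j y) b x = ∏ j ∈ s, mixedPartial (f j) (b ∩ S j) x := by
  induction b using Finset.induction_on_min generalizing x with
  | empty => simp only [empty_inter, mixedPartial_empty]
  | insert i b hi ih =>
    obtain ⟨hiS, hbS⟩ := insert_subset_iff.1 hb
    rw [card_insert_of_notMem fun hib => (hi i hib).false, Nat.cast_add_one] at hf
    have mixedPartial_prod_b := ih (fun j hj => (hf j hj).of_le le_self_add) hbS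
    calc mixedPartial (fun y => ∏ j ∈ s, f j y) (insert i b) x
        = fderiv ℝ (mixedPartial (fun y => ∏ j ∈ s, f j y) b) x (Pi.single i 1) :=
          mixedPartial_insert_of_forall_lt (contDiff_prod hf).contDiffAt hi
      _ = fderiv ℝ (fun y => ∏ j ∈ s, mixedPartial (f j) (b ∩ S j) y) x (Pi.single i 1) := by
          rw [funext mixedPartial_prod_b]
      _ = ∏ j ∈ s, mixedPartial (f j) (insert i b ∩ S j) x :=
          fderiv_prod_mixedPartial_inter_single (fun j hj => (hf j hj).contDiffAt) hdep hS hi hiS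

theorem mixedPartial_partition_sum_general {a b : Finset (Fin n)}
    {z : Finset (Fin n) → (Fin n → ℝ) → A} (hz : ∀ c ⊆ a, ContDiff ℝ #b (z c))
    (hdep : ∀ c ⊆ a, DependsOn (z c) c) (hba : b ⊆ a) (w : Finpartition a → A)
    (x : Fin n → ℝ) :
    mixedPartial (fun γ => ∑ p : Finpartition a, w p * ∏ c ∈ p.parts, z c γ) b x =
      ∑ p : Finpartition a, w p * ∏ c ∈ p.parts, mixedPartial (z c) (b ∩ c) x := by
  have hprod (p : Finpartition a) : ContDiff ℝ #b (fun γ => ∏ c ∈ p.parts, z c γ) :=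
    contDiff_prod fun c hc => hz c (p.le hc)
  rw [mixedPartial_sum fun p _ => (contDiff_const.mul (hprod p)).contDiffAt]
  refine sum_congr rfl fun p _ => ?_
  rw [mixedPartial_const_mul (w p) (hprod p).contDiffAt,
    mixedPartial_prod_of_pairwiseDisjoint (S := id) (fun c hc => hz c (p.le hc))
      (fun c hc => hdep c (p.le hc)) p.disjoint (p.biUnion_parts.symm ▸ hba)]
  rfl

end MixedPartialAlgebra

/-- Differentiating a cumulant-type partition sum term by term: if each `z(c)`
is smooth and depends only on the coordinates `γ_j` with `j ∈ c`, and `z(∅) ≡ 1`,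
then for `b ⊆ a` the mixed partial `∂^γ_b` at `γ = 0` of
`γ ↦ ∑_p (|p|−1)!(−1)^{|p|−1} ∏_{c∈p} z(c)(γ)` equals
`∑_p (|p|−1)!(−1)^{|p|−1} ∏_{c∈p} z_b(c)` with `z_b(c) = ∂^γ_{b∩c} z(c)|_{γ=0}`. -/
theorem mixedPartial_partition_sum (n : ℕ) (z : Finset (Fin n) → (Fin n → ℝ) → ℂ)
    (hsmooth : ∀ c, ContDiff ℝ (⊤ : ℕ∞) (z c))
    (hdep : ∀ c, ∀ γ γ' : Fin n → ℝ, (∀ j ∈ c, γ j = γ' j) → z c γ = z c γ')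
    (hempty : ∀ γ, z ∅ γ = 1)
    (a b : Finset (Fin n)) (hba : b ⊆ a) :
    mixedPartial (fun γ => ∑ p : Finpartition a,
        (Nat.factorial (p.parts.card - 1) : ℂ) * (-1 : ℂ) ^ (p.parts.card - 1) *
          ∏ c ∈ p.parts, z c γ) b 0 =
      ∑ p : Finpartition a,
        (Nat.factorial (p.parts.card - 1) : ℂ) * (-1 : ℂ) ^ (p.parts.card - 1) *
          ∏ c ∈ p.parts, mixedPartial (z c) (b ∩ c) 0 := by
  exact mixedPartial_partition_sum_general (fun c _ => (hsmooth c).of_le (mod_cast le_top))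
    (fun c _ γ γ' => hdep c γ γ') hba _ 0
end
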